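/- There exists a constant C > 0, depending only on λ and A*, such that for every sequence (T_i)_{i≥1} ⊂ 𝓜 with transfer operators ℒ_i, every k ≥ 1, and every Lipschitz continuous h : 𝕊 → ℝ: (1) ‖ℒ_k ⋯ ℒ_1 1‖_∞ ≤ C; (2) ‖ℒ_k ⋯ ℒ_1 h‖_∞ ≤ C‖h‖_∞; (3) ‖ℒ_k ⋯ ℒ_1 h‖_Lip ≤ C‖h‖_Lip; and (4) the Lasota–Yorke inequality ‖ℒ_k ⋯ ℒ_1 h‖_Lip ≤ C λ^{−k} ‖h‖_Lip + C‖h‖_∞ holds. -/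

import Mathlib

open MeasureTheory Filter Topology Set UniformConvergence

noncomputable section

instance : Fact ((0:ℝ) < 1) := ⟨zero_lt_one⟩

/-- The circle `𝕊 = ℝ/ℤ`. -/
abbrev Circle1 : Type := AddCircle (1 : ℝ)

/-- A `C²` expanding circle map with expansion `≥ lam` and `‖T''‖_∞ ≤ Astar`,
encoded by a lift `F : ℝ → ℝ` satisfying `F (x+1) = F x + deg`. -/
structure CM (lam Astar : ℝ) where
  F : ℝ → ℝ
  deg : ℤ
  lift_add_one : ∀ x : ℝ, F (x + 1) = F x + deg
  contDiff : ContDiff ℝ 2 F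
  expanding : ∀ x : ℝ, lam ≤ deriv F x
  second_bound : ∀ x : ℝ, |deriv (deriv F) x| ≤ Astar

namespace CM

variable {lam Astar : ℝ}

/-- The induced map on the circle. -/
def toMap (T : CM lam Astar) : Circle1 → Circle1 :=
  fun x => (↑(T.F ((AddCircle.equivIco 1 0 x : ℝ))) : Circle1)

/-- The derivative of `T`, as a function on the circle. -/
def dmap (T : CM lam Astar) : Circle1 → ℝ :=
  fun x => deriv T.F ((AddCircle.equivIco 1 0 x : ℝ))

end CM

/-- The `C¹` distance on the space of maps. -/
def dC1 {lam Astar : ℝ} (T₁ T₂ : CM lam Astar) : ℝ :=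
  (⨆ x : Circle1, dist (T₁.toMap x) (T₂.toMap x)) + (⨆ x : Circle1, |T₁.dmap x - T₂.dmap x|)

/-- The transfer operator `ℒ_T h (x) = ∑_{T y = x} h y / T' y`. -/
def transfer {lam Astar : ℝ} (T : CM lam Astar) (h : Circle1 → ℝ) : Circle1 → ℝ :=
  fun x => ∑' y : {y : Circle1 // T.toMap y = x}, h y / T.dmap y

/-- Iterated transfer operators `ℒ_k ⋯ ℒ_1` of the sequence `T_1, T_2, …` (`Ts i = T_i`). -/
def transferIter {lam Astar : ℝ} (Ts : ℕ → CM lam Astar) : ℕ → (Circle1 → ℝ) → (Circle1 → ℝ)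
  | 0, h => h
  | (k+1), h => transfer (Ts (k+1)) (transferIter Ts k h)

/-- Composition `T_k ∘ ⋯ ∘ T_1` as circle maps. -/
def mapIter {lam Astar : ℝ} (Ts : ℕ → CM lam Astar) : ℕ → Circle1 → Circle1
  | 0 => id
  | (k+1) => (Ts (k+1)).toMap ∘ mapIter Ts k

/-- Composition of the lifts `F_k ∘ ⋯ ∘ F_1`. -/
def liftIter {lam Astar : ℝ} (Ts : ℕ → CM lam Astar) : ℕ → ℝ → ℝ
  | 0 => id
  | (k+1) => (Ts (k+1)).F ∘ liftIter Ts k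

/-- A real representative of `z`. -/
def zrep (z : Circle1) : ℝ := (AddCircle.equivIco 1 0 z : ℝ)

/-- The coordinate on the cut circle `J_z = 𝕊 ∖ {z}`. -/
def arcCoord (z x : Circle1) : ℝ := ((AddCircle.equivIoc 1 (zrep z) x : ℝ))

/-- `|x − y|_z`: the length of the subarc of `J_z` connecting `x` and `y`. -/
def arcDist (z x y : Circle1) : ℝ := |arcCoord z x - arcCoord z y|

/-- `g` is Lipschitz on `J_z = 𝕊 ∖ {z}` with constant `L`. -/
def LipOnArc (z : Circle1) (L : ℝ) (g : Circle1 → ℝ) : Prop :=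
  ∀ x y : Circle1, x ≠ z → y ≠ z → |g x - g y| ≤ L * arcDist z x y

/-- A probability density w.r.t. the Haar–Lebesgue measure `𝔪` on the circle. -/
def IsProbDensity (ψ : Circle1 → ℝ) : Prop :=
  Integrable ψ volume ∧ (∫ x : Circle1, ψ x) = 1 ∧ ∀ x, 0 ≤ ψ x

/-- The class `𝒟_L`: positive probability densities whose logarithm is Lipschitz
with constant `L` on `J_z` for some `z`. -/
def memD (L : ℝ) (ψ : Circle1 → ℝ) : Prop :=
  IsProbDensity ψ ∧ (∀ x, 0 < ψ x) ∧ ∃ z : Circle1, LipOnArc z L (fun x => Real.log (ψ x))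

/-- The `L¹(𝔪)` norm. -/
def l1norm (h : Circle1 → ℝ) : ℝ := ∫ x : Circle1, |h x|

/-- The supremum norm. -/
def supNorm (h : Circle1 → ℝ) : ℝ := ⨆ x : Circle1, |h x|

/-- The Lipschitz constant of `h` (w.r.t. the metric of the circle). -/
def lipConst (h : Circle1 → ℝ) : ℝ :=
  sInf {L : ℝ | 0 ≤ L ∧ ∀ x y : Circle1, |h x - h y| ≤ L * dist x y}

/-- The Lipschitz norm `‖h‖_Lip = Lip(h) + ‖h‖_∞`. -/
def lipNorm (h : Circle1 → ℝ) : ℝ := lipConst h + supNorm h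

/-- `ρ` is the density of the SRB measure of `T`: the density of a `T`-invariant
probability measure equivalent to `𝔪`. -/
def IsSRBDensity {lam Astar : ℝ} (T : CM lam Astar) (ρ : Circle1 → ℝ) : Prop :=
  IsProbDensity ρ ∧ (∀ᵐ x : Circle1, 0 < ρ x) ∧
    Measure.map T.toMap (volume.withDensity (fun x => ENNReal.ofReal (ρ x))) =
      volume.withDensity (fun x => ENNReal.ofReal (ρ x))

section QDS

variable {lam Astar : ℝ}

/-- `x_{n,k} = T_{n,k} ∘ ⋯ ∘ T_{n,1}` for a triangular array. -/
def arrIter (Tarr : ℕ → ℕ → CM lam Astar) (n : ℕ) : ℕ → Circle1 → Circle1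
  | 0 => id
  | (k+1) => (Tarr n (k+1)).toMap ∘ arrIter Tarr n k

/-- `ℒ_{n,k} ⋯ ℒ_{n,1}` for a triangular array. -/
def arrTransfer (Tarr : ℕ → ℕ → CM lam Astar) (n : ℕ) : ℕ → (Circle1 → ℝ) → (Circle1 → ℝ)
  | 0, h => h
  | (k+1), h => transfer (Tarr n (k+1)) (arrTransfer Tarr n k h)

/-- `f_{n,k} = f ∘ T_{n,k} ∘ ⋯ ∘ T_{n,1}` evaluated at `x`. -/
def fnk (Tarr : ℕ → ℕ → CM lam Astar) (f : Circle1 → ℝ) (n k : ℕ) (x : Circle1) : ℝ :=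
  f (arrIter Tarr n k x)

/-- `ζₙ(x,t) = n⁻¹ (∑_{k<⌊nt⌋} f_{n,k}(x) + {nt}·f_{n,⌊nt⌋}(x))`. -/
def zetaP (Tarr : ℕ → ℕ → CM lam Astar) (f : Circle1 → ℝ) (n : ℕ) (x : Circle1) (t : ℝ) : ℝ :=
  (n : ℝ)⁻¹ * ((∑ k ∈ Finset.range ⌊(n : ℝ) * t⌋₊, fnk Tarr f n k x) +
    Int.fract ((n : ℝ) * t) * fnk Tarr f n ⌊(n : ℝ) * t⌋₊ x)

/-- `ξₙ(x,t) = √n ζₙ(x,t) − √n μ(ζₙ(·,t))` for a measure `μ`. -/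
def xiP (Tarr : ℕ → ℕ → CM lam Astar) (f : Circle1 → ℝ) (μ : Measure Circle1) (n : ℕ)
    (x : Circle1) (t : ℝ) : ℝ :=
  Real.sqrt n * zetaP Tarr f n x t - Real.sqrt n * ∫ y, zetaP Tarr f n y t ∂μ

/-- The Hölder continuity (exponent `η`) of the curve `γ` on `[0,1]`, w.r.t. `d_{C¹}`. -/
def HolderCurve (η : ℝ) (γ : ℝ → CM lam Astar) : Prop :=
  ∃ H : ℝ, ∀ s ∈ Icc (0:ℝ) 1, ∀ t ∈ Icc (0:ℝ) 1, dC1 (γ s) (γ t) ≤ H * |s - t| ^ η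

/-- The convergence-rate condition `sup_n n^η sup_t d_{C¹}(T_{n,⌊nt⌋}, γ_t) < ∞`. -/
def ArrayApprox (η : ℝ) (γ : ℝ → CM lam Astar) (Tarr : ℕ → ℕ → CM lam Astar) : Prop :=
  ∃ M : ℝ, ∀ n : ℕ, 1 ≤ n → ∀ t ∈ Icc (0:ℝ) 1,
    (n : ℝ) ^ η * dC1 (Tarr n ⌊(n : ℝ) * t⌋₊) (γ t) ≤ M

end QDS

/-- The path space: functions `[0,1] → ℝ` with the topology of uniform convergence;
continuous paths (with the supremum metric) embed isometrically. -/
abbrev PathSpace : Type := (Icc (0:ℝ) 1) →ᵤ ℝ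

instance : MeasurableSpace PathSpace := borel PathSpace

/-- A function `[0,1] → ℝ` (given as a function on `ℝ`) as a point of the path space. -/
def pathOf (g : ℝ → ℝ) : PathSpace := UniformFun.ofFun (fun t => g t)

/-- Evaluation of a path at time `t` (clamped to `[0,1]`). -/
def evalPath (t : ℝ) (ω : PathSpace) : ℝ := UniformFun.toFun ω (projIcc 0 1 zero_le_one t)


section Extra

variable {lam Astar : ℝ}

/-- `μ(ζₙ(·,t))` for the measure with density `ρ` w.r.t. `𝔪`. -/
def zetaMean (Tarr : ℕ → ℕ → CM lam Astar) (f : Circle1 → ℝ) (ρ : Circle1 → ℝ)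
    (n : ℕ) (t : ℝ) : ℝ :=
  ∫ y : Circle1, zetaP Tarr f n y t * ρ y

/-- `𝔪(ζₙ(·,t))`, the mean w.r.t. the Lebesgue measure. -/
def zetaMeanM (Tarr : ℕ → ℕ → CM lam Astar) (f : Circle1 → ℝ) (n : ℕ) (t : ℝ) : ℝ :=
  ∫ y : Circle1, zetaP Tarr f n y t

/-- `ξₙ(x,t) = √n ζₙ(x,t) − √n μ(ζₙ(·,t))`, where `μ` has density `ρ`. -/
def xiD (Tarr : ℕ → ℕ → CM lam Astar) (f : Circle1 → ℝ) (ρ : Circle1 → ℝ)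
    (n : ℕ) (x : Circle1) (t : ℝ) : ℝ :=
  Real.sqrt n * zetaP Tarr f n x t - Real.sqrt n * zetaMean Tarr f ρ n t

end Extra

/-- The σ-algebra `𝔉_t` on the path space, generated by the evaluations at times `s ∈ [0,t]`. -/
def pathFiltration (t : ℝ) : MeasurableSpace PathSpace :=
  ⨆ (s : ℝ) (_ : 0 ≤ s ∧ s ≤ t), MeasurableSpace.comap (evalPath s) (borel ℝ)

/-- The process `M_t(ω) = A(ω(t)) − A(ω(0)) − ½∫₀ᵗ σ̂ₛ²·A''(ω(s)) ds`. -/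
def MGproc (σ2 : ℝ → ℝ) (A : ℝ → ℝ) (t : ℝ) (ω : PathSpace) : ℝ :=
  A (evalPath t ω) - A (evalPath 0 ω) -
    (1/2) * ∫ s in (0:ℝ)..t, σ2 s * deriv (deriv A) (evalPath s ω)

/-- `P` solves the martingale problem on `C⁰([0,1],ℝ)` for the generator `½σ̂ₜ² d²/dx²`,
started at `0`:  `P` is a probability measure, concentrated on continuous paths starting at `0`,
and for every `A ∈ C_c^∞(ℝ)` the process `MGproc σ2 A` is a `P`-martingale w.r.t. the
natural filtration `𝔉_t`.  -/
def SolvesMartingaleProblem (σ2 : ℝ → ℝ) (P : Measure PathSpace) : Prop :=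
  IsProbabilityMeasure P ∧
  P {ω : PathSpace | evalPath 0 ω = 0} = 1 ∧
  P {ω : PathSpace | Continuous (UniformFun.toFun ω)} = 1 ∧
  ∀ A : ℝ → ℝ, ContDiff ℝ (⊤ : ℕ∞) A → HasCompactSupport A →
    (∀ t ∈ Icc (0:ℝ) 1, Integrable (MGproc σ2 A t) P) ∧
    (∀ t ∈ Icc (0:ℝ) 1, @Measurable PathSpace ℝ (pathFiltration t) _ (MGproc σ2 A t)) ∧
    (∀ s ∈ Icc (0:ℝ) 1, ∀ t ∈ Icc (0:ℝ) 1, s ≤ t →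
      P[MGproc σ2 A t | pathFiltration s] =ᵐ[P] MGproc σ2 A s)

end

/-!
Let `ψ` be the inverse of a lift of `T_k ∘ ⋯ ∘ T_1`, a map of degree `D`. The preimages of `x` are
the classes of `ψ (x + i)` for `i < D`, so `ℒ_k ⋯ ℒ_1 h (x) = ∑ i < D, h (ψ (x + i)) ψ' (x + i)`.
The chain rule gives `ψ' ≤ λ⁻ᵏ`, and `log ψ'` is Lipschitz with a constant `A` independent of `k`,
since the distortion of each factor is damped geometrically by the factors applied after it. As
`∑ i < D, (ψ (x + i + 1) - ψ (x + i)) = 1`, bounded distortion yields `∑ i < D, ψ' (x + i) ≤ e ^ A`,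
which controls both the supremum norm and, after estimating the increments of `ψ'` by those of
`log ψ'`, the Lipschitz constant.
-/

theorem sum_range_mul_eq_sum_sum {M : Type*} [AddCommMonoid M] (f : ℕ → M) (m n : ℕ) :
    ∑ k ∈ Finset.range (m * n), f k =
      ∑ i ∈ Finset.range m, ∑ j ∈ Finset.range n, f (i * n + j) := by
  induction m with
  | zero => simp
  | succ m ih => rw [Nat.succ_mul, Finset.sum_range_add, ih, Finset.sum_range_succ]

theorem abs_sub_le_max_mul_abs_log_sub {a b : ℝ} (ha : 0 < a) (hb : 0 < b) :
    |a - b| ≤ max a b * |Real.log a - Real.log b| := by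
  wlog hab : b ≤ a generalizing a b
  · rw [abs_sub_comm, max_comm, abs_sub_comm (Real.log a)]
    exact this hb ha (le_of_not_ge hab)
  have hlog : 1 - b / a ≤ Real.log a - Real.log b := by
    simpa [Real.log_div ha.ne' hb.ne'] using Real.one_sub_inv_le_log_of_pos (div_pos ha hb)
  rw [max_eq_left hab, abs_of_nonneg (sub_nonneg.2 hab)]
  calc a - b = a * (1 - b / a) := by field_simp
    _ ≤ a * |Real.log a - Real.log b| :=
        mul_le_mul_of_nonneg_left (hlog.trans (le_abs_self _)) ha.le

theorem abs_sub_le_of_abs_deriv_le {f : ℝ → ℝ} {C : ℝ} (hf : Differentiable ℝ f)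
    (hC : ∀ x, |deriv f x| ≤ C) (x y : ℝ) : |f x - f y| ≤ C * |x - y| :=
  convex_univ.norm_image_sub_le_of_norm_deriv_le (fun z _ => hf z) (fun z _ => hC z)
    (mem_univ y) (mem_univ x)

theorem surjective_of_le_deriv {f : ℝ → ℝ} {c : ℝ} (hf : Differentiable ℝ f) (hc : 0 < c)
    (hderiv : ∀ x, c ≤ deriv f x) : Function.Surjective f := by
  have slope {x y : ℝ} (hxy : x ≤ y) : c * (y - x) ≤ f y - f x :=
    mul_sub_le_image_sub_of_le_deriv hf hderiv hxy
  have top : Tendsto (fun x : ℝ => f 0 + c * x) atTop atTop :=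
    tendsto_atTop_add_const_left _ _ (tendsto_id.const_mul_atTop hc)
  have bot : Tendsto (fun x : ℝ => f 0 + c * x) atBot atBot :=
    tendsto_atBot_add_const_left _ _ (tendsto_id.const_mul_atBot hc)
  refine hf.continuous.surjective (tendsto_atTop_mono' _ ?_ top) (tendsto_atBot_mono' _ ?_ bot)
  · filter_upwards [eventually_ge_atTop 0] with x hx
    linarith [slope hx]
  · filter_upwards [eventually_le_atBot 0] with x hx
    linarith [slope hx]

/-! ### Points of the circle and their real representatives -/

section AddCircle

variable {p : ℝ}

theorem addCircle_coe_eq_coe_iff {u v : ℝ} :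
    (u : AddCircle p) = v ↔ ∃ n : ℤ, u = v + n * p := by
  rw [← sub_eq_zero, ← AddCircle.coe_sub, AddCircle.coe_eq_zero_iff]
  exact exists_congr fun n => by rw [zsmul_eq_mul, eq_sub_iff_add_eq', eq_comm]

theorem apply_equivIco_coe_of_periodic [Fact (0 < p)] {α : Type*} {g : ℝ → α}
    (hg : Function.Periodic g p) (a u : ℝ) :
    g (AddCircle.equivIco p a (u : AddCircle p)) = g u := by
  rw [← hg.lift_coe, AddCircle.coe_equivIco, hg.lift_coe]

theorem dist_addCircle_coe_le (u v : ℝ) : dist (u : AddCircle p) v ≤ |u - v| := by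
  rw [dist_eq_norm, ← AddCircle.coe_sub]
  exact QuotientAddGroup.norm_mk_le_norm

theorem exists_real_abs_sub_eq_dist (x y : AddCircle p) :
    ∃ u v : ℝ, (u : AddCircle p) = x ∧ (v : AddCircle p) = y ∧ |u - v| = dist x y := by
  obtain ⟨a, rfl⟩ := QuotientAddGroup.mk_surjective x
  obtain ⟨b, rfl⟩ := QuotientAddGroup.mk_surjective y
  refine ⟨a, b + round (p⁻¹ * (a - b)) • p, rfl, ?_, ?_⟩
  · rw [AddCircle.coe_add, AddCircle.coe_zsmul, AddCircle.coe_period, smul_zero, add_zero]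
  · rw [dist_eq_norm, ← AddCircle.coe_sub, AddCircle.norm_eq, zsmul_eq_mul, sub_sub]

end AddCircle

/-! ### Inverse lifts -/

/-- `ψ` is the inverse of a lift of an expanding circle map of degree `D`; it contracts by the
factor `κ` and has distortion `A`, the Lipschitz constant of `log ψ'`. -/
structure IsInverseLift (ψ : ℝ → ℝ) (D : ℕ) (κ A : ℝ) : Prop where
  differentiable : Differentiable ℝ ψ
  deriv_pos : ∀ x, 0 < deriv ψ x
  deriv_le : ∀ x, deriv ψ x ≤ κ
  add_degree : ∀ x, ψ (x + D) = ψ x + 1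
  abs_log_deriv_sub_le : ∀ x y, |Real.log (deriv ψ x) - Real.log (deriv ψ y)| ≤ A * |x - y|

/-- The transfer operator of the circle map with inverse lift `ψ` of degree `D`, acting on
functions on the real line (a function on the circle is identified with its periodic lift). -/
noncomputable def liftTransfer (ψ : ℝ → ℝ) (D : ℕ) (g : ℝ → ℝ) (x : ℝ) : ℝ :=
  ∑ i ∈ Finset.range D, g (ψ (x + i)) * deriv ψ (x + i)

namespace IsInverseLift

variable {ψ φ : ℝ → ℝ} {D d : ℕ} {κ ν A a : ℝ}

theorem distortion_nonneg (hψ : IsInverseLift ψ D κ A) : 0 ≤ A := by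
  simpa using (abs_nonneg _).trans (hψ.abs_log_deriv_sub_le 1 0)

theorem abs_sub_le (hψ : IsInverseLift ψ D κ A) (x y : ℝ) : |ψ x - ψ y| ≤ κ * |x - y| :=
  abs_sub_le_of_abs_deriv_le hψ.differentiable
    (fun z => (abs_of_pos (hψ.deriv_pos z)).trans_le (hψ.deriv_le z)) x y

theorem add_degree_mul_int (hψ : IsInverseLift ψ D κ A) (x : ℝ) (n : ℤ) :
    ψ (x + D * n) = ψ x + n := by
  let shiftMap : AddConstMap ℝ ℝ (D : ℝ) (1 : ℝ) := ⟨ψ, hψ.add_degree⟩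
  simpa only [zsmul_eq_mul, mul_one, mul_comm] using! AddConstMapClass.map_add_zsmul shiftMap x n

theorem add_degree_mul_nat (hψ : IsInverseLift ψ D κ A) (x : ℝ) (n : ℕ) :
    ψ (x + D * n) = ψ x + n := by
  exact_mod_cast hψ.add_degree_mul_int x n

theorem deriv_add_degree_mul_nat (hψ : IsInverseLift ψ D κ A) (x : ℝ) (n : ℕ) :
    deriv ψ (x + D * n) = deriv ψ x := by
  rw [← deriv_comp_add_const]
  simp only [hψ.add_degree_mul_nat, deriv_add_const]

theorem coe_apply_eq_coe_apply_iff (hψ : IsInverseLift ψ D κ A) {x y : ℝ} :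
    (ψ x : Circle1) = ψ y ↔ ∃ n : ℤ, x = y + D * n := by
  simp only [addCircle_coe_eq_coe_iff, mul_one, ← hψ.add_degree_mul_int,
    (strictMono_of_deriv_pos hψ.deriv_pos).injective.eq_iff]

protected theorem id (hA : 0 ≤ A) : IsInverseLift id 1 1 A where
  differentiable := differentiable_id
  deriv_pos := by simp
  deriv_le := by simp
  add_degree := by simp
  abs_log_deriv_sub_le x y := by simpa using mul_nonneg hA (abs_nonneg (x - y))

theorem comp (hψ : IsInverseLift ψ D κ A) (hφ : IsInverseLift φ d ν a) :
    IsInverseLift (ψ ∘ φ) (D * d) (κ * ν) (A * ν + a) := by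
  have deriv_comp_eq (x : ℝ) : deriv (ψ ∘ φ) x = deriv ψ (φ x) * deriv φ x :=
    deriv_comp x (hψ.differentiable _) (hφ.differentiable x)
  refine ⟨hψ.differentiable.comp hφ.differentiable, fun x => ?_, fun x => ?_, fun x => ?_,
    fun x y => ?_⟩
  · rw [deriv_comp_eq]
    exact mul_pos (hψ.deriv_pos _) (hφ.deriv_pos x)
  · rw [deriv_comp_eq]
    exact mul_le_mul (hψ.deriv_le _) (hφ.deriv_le x) (hφ.deriv_pos x).le
      ((hψ.deriv_pos _).le.trans (hψ.deriv_le (φ x)))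
  · rw [Function.comp_apply, Nat.cast_mul, mul_comm, hφ.add_degree_mul_nat, hψ.add_degree,
      Function.comp_apply]
  · have log_deriv_comp_eq (z : ℝ) :
        Real.log (deriv (ψ ∘ φ) z) = Real.log (deriv ψ (φ z)) + Real.log (deriv φ z) := by
      rw [deriv_comp_eq, Real.log_mul (hψ.deriv_pos _).ne' (hφ.deriv_pos z).ne']
    rw [log_deriv_comp_eq, log_deriv_comp_eq, add_sub_add_comm]
    calc |Real.log (deriv ψ (φ x)) - Real.log (deriv ψ (φ y)) +
            (Real.log (deriv φ x) - Real.log (deriv φ y))|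
        ≤ A * |φ x - φ y| + a * |x - y| :=
          (abs_add_le _ _).trans
            (add_le_add (hψ.abs_log_deriv_sub_le _ _) (hφ.abs_log_deriv_sub_le x y))
      _ ≤ A * (ν * |x - y|) + a * |x - y| := by
          gcongr
          exacts [hψ.distortion_nonneg, hφ.abs_sub_le x y]
      _ = (A * ν + a) * |x - y| := by ring

theorem liftTransfer_comp (hψ : Differentiable ℝ ψ) (hφ : IsInverseLift φ d ν a)
    (g : ℝ → ℝ) : liftTransfer (ψ ∘ φ) (D * d) g = liftTransfer φ d (liftTransfer ψ D g) := by
  funext x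
  have summand (i j : ℕ) :
      g ((ψ ∘ φ) (x + (i * d + j : ℕ))) * deriv (ψ ∘ φ) (x + (i * d + j : ℕ)) =
        g (ψ (φ (x + j) + i)) * deriv ψ (φ (x + j) + i) * deriv φ (x + j) := by
    have shift : x + ((i * d + j : ℕ) : ℝ) = x + j + d * i := by push_cast; ring
    rw [deriv_comp _ (hψ _) (hφ.differentiable _), Function.comp_apply, shift,
      hφ.add_degree_mul_nat, hφ.deriv_add_degree_mul_nat, mul_assoc]
  simp only [liftTransfer, sum_range_mul_eq_sum_sum, summand, Finset.sum_mul]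
  exact Finset.sum_comm

/-! ### Bounded distortion -/

theorem deriv_le_exp_mul_deriv (hψ : IsInverseLift ψ D κ A) {x y : ℝ} (hxy : |x - y| ≤ 1) :
    deriv ψ x ≤ Real.exp A * deriv ψ y := by
  have hlog : Real.log (deriv ψ x) ≤ A + Real.log (deriv ψ y) := by
    have := (le_abs_self _).trans (hψ.abs_log_deriv_sub_le x y)
    linarith [mul_le_of_le_one_right hψ.distortion_nonneg hxy]
  simpa only [Real.exp_add, Real.exp_log (hψ.deriv_pos _)] using Real.exp_le_exp.2 hlog

theorem deriv_le_exp_mul_sub (hψ : IsInverseLift ψ D κ A) (x : ℝ) :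
    deriv ψ x ≤ Real.exp A * (ψ (x + 1) - ψ x) := by
  obtain ⟨c, ⟨hxc, hcx⟩, hc⟩ := exists_deriv_eq_slope ψ (lt_add_one x)
    hψ.differentiable.continuous.continuousOn hψ.differentiable.differentiableOn
  rw [add_sub_cancel_left, div_one] at hc
  rw [← hc]
  exact hψ.deriv_le_exp_mul_deriv (abs_le.2 ⟨by linarith, by linarith⟩)

theorem sum_deriv_le_exp (hψ : IsInverseLift ψ D κ A) (x : ℝ) :
    ∑ i ∈ Finset.range D, deriv ψ (x + i) ≤ Real.exp A := by
  calc ∑ i ∈ Finset.range D, deriv ψ (x + i)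
      ≤ ∑ i ∈ Finset.range D, Real.exp A * (ψ (x + (i + 1 : ℕ)) - ψ (x + i)) :=
        Finset.sum_le_sum fun i _ => by
          simpa only [Nat.cast_succ, add_assoc] using hψ.deriv_le_exp_mul_sub (x + i)
    _ = Real.exp A := by
        rw [← Finset.mul_sum, Finset.sum_range_sub (fun i : ℕ => ψ (x + i)), hψ.add_degree]
        simp

theorem abs_deriv_sub_le (hψ : IsInverseLift ψ D κ A) (x y : ℝ) :
    |deriv ψ x - deriv ψ y| ≤ A * |x - y| * (deriv ψ x + deriv ψ y) := by
  have hx := hψ.deriv_pos x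
  have hy := hψ.deriv_pos y
  calc |deriv ψ x - deriv ψ y|
      ≤ max (deriv ψ x) (deriv ψ y) * |Real.log (deriv ψ x) - Real.log (deriv ψ y)| :=
        abs_sub_le_max_mul_abs_log_sub hx hy
    _ ≤ (deriv ψ x + deriv ψ y) * (A * |x - y|) :=
        mul_le_mul (max_le_add_of_nonneg hx.le hy.le) (hψ.abs_log_deriv_sub_le x y)
          (abs_nonneg _) (by positivity)
    _ = A * |x - y| * (deriv ψ x + deriv ψ y) := mul_comm _ _

theorem sum_abs_deriv_sub_le (hψ : IsInverseLift ψ D κ A) (x y : ℝ) :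
    ∑ i ∈ Finset.range D, |deriv ψ (x + i) - deriv ψ (y + i)| ≤
      2 * A * Real.exp A * |x - y| := by
  have hA := hψ.distortion_nonneg
  calc ∑ i ∈ Finset.range D, |deriv ψ (x + i) - deriv ψ (y + i)|
      ≤ ∑ i ∈ Finset.range D, A * |x - y| * (deriv ψ (x + i) + deriv ψ (y + i)) :=
        Finset.sum_le_sum fun i _ => by
          simpa only [add_sub_add_right_eq_sub] using hψ.abs_deriv_sub_le (x + i) (y + i)
    _ = A * |x - y| *
          (∑ i ∈ Finset.range D, deriv ψ (x + i) + ∑ i ∈ Finset.range D, deriv ψ (y + i)) := by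
        rw [← Finset.mul_sum, Finset.sum_add_distrib]
    _ ≤ A * |x - y| * (Real.exp A + Real.exp A) := by
        gcongr <;> exact hψ.sum_deriv_le_exp _
    _ = 2 * A * Real.exp A * |x - y| := by ring

theorem abs_liftTransfer_le (hψ : IsInverseLift ψ D κ A) {g : ℝ → ℝ} {s : ℝ}
    (hg : ∀ u, |g u| ≤ s) (x : ℝ) : |liftTransfer ψ D g x| ≤ Real.exp A * s := by
  have hs : 0 ≤ s := (abs_nonneg _).trans (hg 0)
  calc |liftTransfer ψ D g x|
      ≤ ∑ i ∈ Finset.range D, |g (ψ (x + i)) * deriv ψ (x + i)| := Finset.abs_sum_le_sum_abs _ _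
    _ ≤ ∑ i ∈ Finset.range D, s * deriv ψ (x + i) := Finset.sum_le_sum fun i _ => by
        rw [abs_mul, abs_of_pos (hψ.deriv_pos _)]
        exact mul_le_mul_of_nonneg_right (hg _) (hψ.deriv_pos _).le
    _ = (∑ i ∈ Finset.range D, deriv ψ (x + i)) * s := by rw [← Finset.mul_sum, mul_comm]
    _ ≤ Real.exp A * s := mul_le_mul_of_nonneg_right (hψ.sum_deriv_le_exp x) hs

theorem abs_liftTransfer_sub_le (hψ : IsInverseLift ψ D κ A) {g : ℝ → ℝ} {s L : ℝ}
    (hg : ∀ u, |g u| ≤ s) (hL : 0 ≤ L) (hgL : ∀ u v, |g u - g v| ≤ L * |u - v|) (x y : ℝ) :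
    |liftTransfer ψ D g x - liftTransfer ψ D g y| ≤
      Real.exp A * (L * κ + 2 * A * s) * |x - y| := by
  have hs : 0 ≤ s := (abs_nonneg _).trans (hg 0)
  have hκ : 0 ≤ κ := (hψ.deriv_pos 0).le.trans (hψ.deriv_le 0)
  have increment (i : ℕ) : |g (ψ (x + i)) - g (ψ (y + i))| ≤ L * (κ * |x - y|) := by
    refine (hgL _ _).trans (mul_le_mul_of_nonneg_left ?_ hL)
    simpa only [add_sub_add_right_eq_sub] using hψ.abs_sub_le (x + i) (y + i)
  have summand (i : ℕ) :
      |g (ψ (x + i)) * deriv ψ (x + i) - g (ψ (y + i)) * deriv ψ (y + i)| ≤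
        L * (κ * |x - y|) * deriv ψ (x + i) + s * |deriv ψ (x + i) - deriv ψ (y + i)| := by
    have hpos := hψ.deriv_pos (x + i)
    calc |g (ψ (x + i)) * deriv ψ (x + i) - g (ψ (y + i)) * deriv ψ (y + i)|
        = |(g (ψ (x + i)) - g (ψ (y + i))) * deriv ψ (x + i) +
            g (ψ (y + i)) * (deriv ψ (x + i) - deriv ψ (y + i))| := by ring_nf
      _ ≤ |g (ψ (x + i)) - g (ψ (y + i))| * deriv ψ (x + i) +
            |g (ψ (y + i))| * |deriv ψ (x + i) - deriv ψ (y + i)| := by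
          rw [← abs_of_pos hpos, ← abs_mul, ← abs_mul, abs_of_pos hpos]
          exact abs_add_le _ _
      _ ≤ _ := by gcongr; exacts [increment i, hg _]
  calc |liftTransfer ψ D g x - liftTransfer ψ D g y|
      ≤ ∑ i ∈ Finset.range D,
          |g (ψ (x + i)) * deriv ψ (x + i) - g (ψ (y + i)) * deriv ψ (y + i)| := by
        simpa only [liftTransfer, ← Finset.sum_sub_distrib] using Finset.abs_sum_le_sum_abs _ _
    _ ≤ L * (κ * |x - y|) * ∑ i ∈ Finset.range D, deriv ψ (x + i) +
          s * ∑ i ∈ Finset.range D, |deriv ψ (x + i) - deriv ψ (y + i)| := by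
        rw [Finset.mul_sum, Finset.mul_sum, ← Finset.sum_add_distrib]
        exact Finset.sum_le_sum fun i _ => summand i
    _ ≤ L * (κ * |x - y|) * Real.exp A + s * (2 * A * Real.exp A * |x - y|) := by
        gcongr
        exacts [hψ.sum_deriv_le_exp x, hψ.sum_abs_deriv_sub_le x y]
    _ = Real.exp A * (L * κ + 2 * A * s) * |x - y| := by ring

end IsInverseLift

/-! ### The transfer operator of a single map -/

namespace CM

variable {lam Astar : ℝ}

theorem differentiable_F (T : CM lam Astar) : Differentiable ℝ T.F :=
  T.contDiff.differentiable two_ne_zero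

theorem differentiable_deriv_F (T : CM lam Astar) : Differentiable ℝ (deriv T.F) :=
  T.contDiff.differentiable_deriv_two

theorem deriv_F_pos (T : CM lam Astar) (hlam : 0 < lam) (x : ℝ) : 0 < deriv T.F x :=
  hlam.trans_le (T.expanding x)

theorem strictMono_F (T : CM lam Astar) (hlam : 0 < lam) : StrictMono T.F :=
  strictMono_of_deriv_pos (T.deriv_F_pos hlam)

theorem deg_pos (T : CM lam Astar) (hlam : 0 < lam) : 0 < T.deg := by
  have hF : T.F 0 < T.F 0 + T.deg := T.lift_add_one 0 ▸ T.strictMono_F hlam (lt_add_one 0)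
  exact_mod_cast pos_of_lt_add_right hF

theorem toMap_coe (T : CM lam Astar) (u : ℝ) : T.toMap (u : Circle1) = (T.F u : Circle1) :=
  apply_equivIco_coe_of_periodic (g := fun x => (T.F x : Circle1))
    (fun x => addCircle_coe_eq_coe_iff.2 ⟨T.deg, by simpa using T.lift_add_one x⟩) 0 u

theorem dmap_coe (T : CM lam Astar) (u : ℝ) : T.dmap (u : Circle1) = deriv T.F u := by
  refine apply_equivIco_coe_of_periodic (g := deriv T.F) (fun x => ?_) 0 u
  rw [← deriv_comp_add_const]
  simp only [T.lift_add_one, deriv_add_const]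

theorem abs_log_deriv_F_sub_le (T : CM lam Astar) (hlam : 0 < lam) (x y : ℝ) :
    |Real.log (deriv T.F x) - Real.log (deriv T.F y)| ≤ Astar / lam * |x - y| := by
  have hpos := T.deriv_F_pos hlam
  refine abs_sub_le_of_abs_deriv_le (f := fun z => Real.log (deriv T.F z))
    (T.differentiable_deriv_F.log fun z => (hpos z).ne') (fun z => ?_) x y
  rw [deriv.log (T.differentiable_deriv_F z) (hpos z).ne', abs_div, abs_of_pos (hpos z)]
  exact div_le_div₀ ((abs_nonneg _).trans (T.second_bound z)) (T.second_bound z) hlam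
    (T.expanding z)

/-- The inverse of the lift of `T`. -/
noncomputable def inverseLift (T : CM lam Astar) (hlam : 0 < lam) : ℝ ≃o ℝ :=
  ((T.strictMono_F hlam).orderIsoOfSurjective T.F
    (surjective_of_le_deriv T.differentiable_F hlam T.expanding)).symm

theorem F_inverseLift (T : CM lam Astar) (hlam : 0 < lam) (x : ℝ) :
    T.F (T.inverseLift hlam x) = x :=
  (T.inverseLift hlam).symm_apply_apply x

theorem inverseLift_F (T : CM lam Astar) (hlam : 0 < lam) (x : ℝ) :
    T.inverseLift hlam (T.F x) = x :=
  (T.inverseLift hlam).apply_symm_apply x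

theorem hasDerivAt_inverseLift (T : CM lam Astar) (hlam : 0 < lam) (x : ℝ) :
    HasDerivAt (T.inverseLift hlam) (deriv T.F (T.inverseLift hlam x))⁻¹ x :=
  .of_local_left_inverse (T.inverseLift hlam).continuous.continuousAt
    (T.differentiable_F _).hasDerivAt (T.deriv_F_pos hlam _).ne'
    (Eventually.of_forall (T.F_inverseLift hlam))

theorem isInverseLift_inverseLift (T : CM lam Astar) (hlam : 0 < lam) :
    IsInverseLift (T.inverseLift hlam) T.deg.toNat lam⁻¹ (Astar / lam ^ 2) := by
  have deriv_eq (x : ℝ) := (T.hasDerivAt_inverseLift hlam x).deriv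
  have differentiable : Differentiable ℝ (T.inverseLift hlam) :=
    fun x => (T.hasDerivAt_inverseLift hlam x).differentiableAt
  have deriv_pos (x : ℝ) : 0 < deriv (T.inverseLift hlam) x :=
    deriv_eq x ▸ inv_pos.2 (T.deriv_F_pos hlam _)
  have deriv_le (x : ℝ) : deriv (T.inverseLift hlam) x ≤ lam⁻¹ :=
    deriv_eq x ▸ inv_anti₀ hlam (T.expanding _)
  refine ⟨differentiable, deriv_pos, deriv_le, fun x => ?_, fun x y => ?_⟩
  · have hdeg : ((T.deg.toNat : ℕ) : ℝ) = T.deg :=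
      mod_cast Int.toNat_of_nonneg (T.deg_pos hlam).le
    apply (T.strictMono_F hlam).injective
    rw [T.lift_add_one, F_inverseLift, F_inverseLift, hdeg]
  · have contraction := abs_sub_le_of_abs_deriv_le differentiable
      (fun z => (abs_of_pos (deriv_pos z)).trans_le (deriv_le z)) y x
    have hA : 0 ≤ Astar := (abs_nonneg _).trans (T.second_bound 0)
    rw [deriv_eq, deriv_eq, Real.log_inv, Real.log_inv, neg_sub_neg]
    calc _ ≤ Astar / lam * |T.inverseLift hlam y - T.inverseLift hlam x| :=
          T.abs_log_deriv_F_sub_le hlam _ _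
      _ ≤ Astar / lam * (lam⁻¹ * |y - x|) := by gcongr
      _ = Astar / lam ^ 2 * |x - y| := by rw [abs_sub_comm]; field_simp

theorem bijOn_inverseLift_fiber (T : CM lam Astar) (hlam : 0 < lam) (x : ℝ) :
    BijOn (fun i : ℕ => (T.inverseLift hlam (x + i) : Circle1)) (Finset.range T.deg.toNat)
      {y | T.toMap y = x} := by
  have hψ := T.isInverseLift_inverseLift hlam
  have hdeg : (T.deg.toNat : ℤ) = T.deg := Int.toNat_of_nonneg (T.deg_pos hlam).le
  refine ⟨fun i _ => ?_, fun i hi j hj hij => ?_, fun y hy => ?_⟩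
  · rw [mem_ofPred_eq, toMap_coe, F_inverseLift]
    exact addCircle_coe_eq_coe_iff.2 ⟨i, by simp⟩
  · obtain ⟨n, hn⟩ := hψ.coe_apply_eq_coe_apply_iff.1 hij
    rw [add_assoc, add_right_inj] at hn
    have hmod : (i : ℤ) ≡ j [ZMOD T.deg.toNat] := by
      have hijn : (i : ℤ) = j + T.deg.toNat * n := mod_cast hn
      simp [Int.ModEq, hijn]
    exact (Int.natCast_modEq_iff.1 hmod).eq_of_lt_of_lt (Finset.mem_range.1 hi)
      (Finset.mem_range.1 hj)
  · obtain ⟨u, rfl⟩ := QuotientAddGroup.mk_surjective y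
    obtain ⟨m, hm⟩ := addCircle_coe_eq_coe_iff.1 ((T.toMap_coe u).symm.trans hy)
    obtain ⟨i, hi⟩ := Int.eq_ofNat_of_zero_le (Int.emod_nonneg m (T.deg_pos hlam).ne')
    have hi_lt : (i : ℤ) < T.deg := hi ▸ Int.emod_lt_of_pos m (T.deg_pos hlam)
    refine ⟨i, by simpa using by omega, ?_⟩
    rw [← T.inverseLift_F hlam u]
    refine hψ.coe_apply_eq_coe_apply_iff.2 ⟨-(m / T.deg), ?_⟩
    have hdivmod : (m : ℝ) = i + T.deg.toNat * (m / T.deg : ℤ) := by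
      rw [← Int.cast_natCast T.deg.toNat, hdeg, ← Int.cast_natCast i, ← hi]
      exact_mod_cast (Int.emod_add_mul_ediv m T.deg).symm
    rw [hm, hdivmod]
    push_cast
    ring

theorem transfer_coe (T : CM lam Astar) (hlam : 0 < lam) (h : Circle1 → ℝ) (x : ℝ) :
    transfer T h (x : Circle1) =
      liftTransfer (T.inverseLift hlam) T.deg.toNat (fun u => h u) x := by
  let summand (i : ℕ) : ℝ :=
    h (T.inverseLift hlam (x + i) : ℝ) / T.dmap (T.inverseLift hlam (x + i) : ℝ)
  calc transfer T h x = ∑' i : ↥(Finset.range T.deg.toNat : Set ℕ), summand i :=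
        ((BijOn.equiv _ (T.bijOn_inverseLift_fiber hlam x)).tsum_eq _).symm
    _ = ∑ i ∈ Finset.range T.deg.toNat, summand i := Finset.tsum_subtype' _ summand
    _ = liftTransfer (T.inverseLift hlam) T.deg.toNat (fun u => h u) x := by
        simp only [summand, liftTransfer, dmap_coe, (T.hasDerivAt_inverseLift hlam _).deriv,
          div_eq_mul_inv]

end CM

/-! ### Supremum norm and Lipschitz constant -/

theorem abs_le_supNorm {h : Circle1 → ℝ} (hh : Continuous h) (x : Circle1) :
    |h x| ≤ supNorm h :=
  le_ciSup (isCompact_range hh.abs).bddAbove x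

theorem supNorm_le_of_lift {h : Circle1 → ℝ} {s : ℝ} (hs : ∀ u : ℝ, |h u| ≤ s) :
    supNorm h ≤ s :=
  ciSup_le (QuotientAddGroup.mk_surjective.forall.2 hs)

theorem lipConst_nonneg (h : Circle1 → ℝ) : 0 ≤ lipConst h :=
  Real.sInf_nonneg fun _ hL => hL.1

theorem abs_sub_le_lipConst_mul_dist {h : Circle1 → ℝ} {K : NNReal} (hK : LipschitzWith K h)
    (x y : Circle1) : |h x - h y| ≤ lipConst h * dist x y := by
  rcases eq_or_ne x y with rfl | hxy
  · simp
  · rw [← div_le_iff₀ (dist_pos.2 hxy)]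
    exact le_csInf ⟨K, K.2, hK.dist_le_mul⟩ fun L hL => (div_le_iff₀ (dist_pos.2 hxy)).2 (hL.2 x y)

theorem lipConst_le_of_lift {h : Circle1 → ℝ} {L : ℝ} (hL : 0 ≤ L)
    (hh : ∀ u v : ℝ, |h u - h v| ≤ L * |u - v|) : lipConst h ≤ L := by
  refine csInf_le ⟨0, fun _ hM => hM.1⟩ ⟨hL, fun x y => ?_⟩
  obtain ⟨u, v, rfl, rfl, huv⟩ := exists_real_abs_sub_eq_dist x y
  exact huv ▸ hh u v

/-! ### Products of transfer operators -/

/-- A bound on the distortion of all products of maps, the fixed point of the recursion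
`A ↦ A / lam + Astar / lam ^ 2` satisfied by the distortion under composition with one more map. -/
noncomputable def distortionBound (lam Astar : ℝ) : ℝ := Astar / (lam ^ 2 - lam)

theorem distortionBound_mul_inv_add {lam : ℝ} (hlam : 1 < lam) (Astar : ℝ) :
    distortionBound lam Astar * lam⁻¹ + Astar / lam ^ 2 = distortionBound lam Astar := by
  have hlam0 : lam ≠ 0 := by linarith
  have hlam1 : lam - 1 ≠ 0 := by linarith
  rw [distortionBound, show lam ^ 2 - lam = lam * (lam - 1) by ring]
  field_simp
  ring

theorem distortionBound_nonneg {lam Astar : ℝ} (hlam : 1 < lam) (hA : 0 ≤ Astar) :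
    0 ≤ distortionBound lam Astar :=
  div_nonneg hA (by nlinarith)

/-- The constant of the Lasota–Yorke inequality: `e ^ A` bounds the sums of `ψ'` over fibers, and
the term `2 A` comes from the increments of `ψ'`, where `A` is the distortion. -/
noncomputable def lasotaYorkeConst (lam Astar : ℝ) : ℝ :=
  Real.exp (distortionBound lam Astar) * (1 + 2 * distortionBound lam Astar)

theorem exp_distortionBound_le_lasotaYorkeConst {lam Astar : ℝ} (hlam : 1 < lam)
    (hA : 0 ≤ Astar) :
    Real.exp (distortionBound lam Astar) ≤ lasotaYorkeConst lam Astar :=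
  le_mul_of_one_le_right (Real.exp_pos _).le (by linarith [distortionBound_nonneg hlam hA])

section Products

variable {lam Astar : ℝ}

theorem exists_isInverseLift_transferIter (hlam : 1 < lam) (Ts : ℕ → CM lam Astar) (k : ℕ) :
    ∃ (ψ : ℝ → ℝ) (D : ℕ), IsInverseLift ψ D (lam⁻¹ ^ k) (distortionBound lam Astar) ∧
      ∀ (h : Circle1 → ℝ) (x : ℝ),
        transferIter Ts k h (x : Circle1) = liftTransfer ψ D (fun u => h u) x := by
  have hlam0 : 0 < lam := one_pos.trans hlam
  induction k with
  | zero =>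
    have hA : 0 ≤ Astar := (abs_nonneg _).trans ((Ts 0).second_bound 0)
    exact ⟨id, 1, by simpa using .id (distortionBound_nonneg hlam hA),
      fun h x => by simp [transferIter, liftTransfer]⟩
  | succ k ih =>
    obtain ⟨ψ, D, hψ, htransfer⟩ := ih
    have hφ := (Ts (k + 1)).isInverseLift_inverseLift hlam0
    refine ⟨ψ ∘ (Ts (k + 1)).inverseLift hlam0, D * (Ts (k + 1)).deg.toNat, ?_, fun h x => ?_⟩
    · simpa only [← pow_succ, distortionBound_mul_inv_add hlam] using hψ.comp hφ
    · rw [hφ.liftTransfer_comp hψ.differentiable, transferIter, CM.transfer_coe _ hlam0]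
      simp only [htransfer]

theorem supNorm_transferIter_le (hlam : 1 < lam) (Ts : ℕ → CM lam Astar) (k : ℕ)
    {h : Circle1 → ℝ} {s : ℝ} (hs : ∀ x, |h x| ≤ s) :
    supNorm (transferIter Ts k h) ≤ Real.exp (distortionBound lam Astar) * s := by
  obtain ⟨ψ, D, hψ, htransfer⟩ := exists_isInverseLift_transferIter hlam Ts k
  refine supNorm_le_of_lift fun u => ?_
  rw [htransfer]
  exact hψ.abs_liftTransfer_le (fun v => hs v) u

theorem lipConst_transferIter_le (hlam : 1 < lam) (Ts : ℕ → CM lam Astar) (k : ℕ)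
    {h : Circle1 → ℝ} {K : NNReal} (hK : LipschitzWith K h) :
    lipConst (transferIter Ts k h) ≤ Real.exp (distortionBound lam Astar) *
      (lipConst h * lam⁻¹ ^ k + 2 * distortionBound lam Astar * supNorm h) := by
  obtain ⟨ψ, D, hψ, htransfer⟩ := exists_isInverseLift_transferIter hlam Ts k
  have hA := hψ.distortion_nonneg
  have hs := abs_le_supNorm hK.continuous
  have hs0 : 0 ≤ supNorm h := (abs_nonneg _).trans (hs 0)
  have hL := lipConst_nonneg h
  refine lipConst_le_of_lift (by positivity) fun u v => ?_
  rw [htransfer, htransfer]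
  exact hψ.abs_liftTransfer_sub_le (fun w => hs w) hL (fun w z =>
    (abs_sub_le_lipConst_mul_dist hK w z).trans
      (mul_le_mul_of_nonneg_left (dist_addCircle_coe_le w z) hL)) u v

theorem lipNorm_transferIter_le (hlam : 1 < lam) (Ts : ℕ → CM lam Astar) (k : ℕ)
    {h : Circle1 → ℝ} {K : NNReal} (hK : LipschitzWith K h) :
    lipNorm (transferIter Ts k h) ≤
      lasotaYorkeConst lam Astar * lam⁻¹ ^ k * lipConst h +
        lasotaYorkeConst lam Astar * supNorm h := by
  have hsup := supNorm_transferIter_le hlam Ts k (abs_le_supNorm hK.continuous)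
  have hlip := lipConst_transferIter_le hlam Ts k hK
  have hA : 0 ≤ Astar := (abs_nonneg _).trans ((Ts 0).second_bound 0)
  have hcontract : Real.exp (distortionBound lam Astar) * (lam⁻¹ ^ k * lipConst h) ≤
      lasotaYorkeConst lam Astar * (lam⁻¹ ^ k * lipConst h) :=
    mul_le_mul_of_nonneg_right (exp_distortionBound_le_lasotaYorkeConst hlam hA)
      (mul_nonneg (by positivity) (lipConst_nonneg h))
  have hconst : lasotaYorkeConst lam Astar * supNorm h =
      Real.exp (distortionBound lam Astar) * supNorm h +
        Real.exp (distortionBound lam Astar) * (2 * distortionBound lam Astar * supNorm h) := by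
    rw [lasotaYorkeConst]; ring
  rw [lipNorm]
  linarith

end Products

/-- Lemma `lem:LY`.  Uniform bounds for products of transfer operators:
`‖ℒ_k⋯ℒ_1 1‖_∞ ≤ C`, `‖ℒ_k⋯ℒ_1 h‖_∞ ≤ C‖h‖_∞`, `‖ℒ_k⋯ℒ_1 h‖_Lip ≤ C‖h‖_Lip`, and the
Lasota–Yorke inequality `‖ℒ_k⋯ℒ_1 h‖_Lip ≤ Cλ^{−k}‖h‖_Lip + C‖h‖_∞`, for every `k ≥ 1`,
every sequence `(T_i) ⊆ 𝓜` and every Lipschitz `h`. -/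
theorem statement2 {lam Astar : ℝ} (hlam : 1 < lam) (hA : 0 < Astar) :
    ∃ C : ℝ, 0 < C ∧
      ∀ (Ts : ℕ → CM lam Astar) (k : ℕ), 1 ≤ k →
        supNorm (transferIter Ts k (fun _ => (1 : ℝ))) ≤ C ∧
        ∀ h : Circle1 → ℝ, (∃ K : NNReal, LipschitzWith K h) →
          supNorm (transferIter Ts k h) ≤ C * supNorm h ∧
          lipNorm (transferIter Ts k h) ≤ C * lipNorm h ∧
          lipNorm (transferIter Ts k h) ≤ C * lam ^ (-(k : ℤ)) * lipNorm h + C * supNorm h := by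
  have hexp := exp_distortionBound_le_lasotaYorkeConst hlam hA.le
  have hC : 0 < lasotaYorkeConst lam Astar := (Real.exp_pos _).trans_le hexp
  refine ⟨lasotaYorkeConst lam Astar, hC, fun Ts k _ => ⟨?_, ?_⟩⟩
  · have hone := supNorm_transferIter_le hlam Ts k (h := fun _ => 1) (s := 1) (by simp)
    exact (hone.trans_eq (mul_one _)).trans hexp
  rintro h ⟨K, hK⟩
  have hs := abs_le_supNorm hK.continuous
  have hs0 : 0 ≤ supNorm h := (abs_nonneg _).trans (hs 0)
  have hL0 := lipConst_nonneg h
  have hLY := lipNorm_transferIter_le hlam Ts k hK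
  refine ⟨?_, ?_, ?_⟩
  · exact (supNorm_transferIter_le hlam Ts k hs).trans (mul_le_mul_of_nonneg_right hexp hs0)
  · have hpow : lam⁻¹ ^ k ≤ 1 := pow_le_one₀ (by positivity) (inv_le_one_of_one_le₀ hlam.le)
    refine hLY.trans ?_
    rw [lipNorm, mul_add]
    gcongr
    exact mul_le_of_le_one_right hC.le hpow
  · rw [zpow_neg, zpow_natCast, ← inv_pow]
    refine hLY.trans ?_
    gcongr
    exact le_add_of_nonneg_right hs0
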